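/- Let G be a P4-sparse graph and let A be a set of four vertices inducing a P4 in G. Then there do not exist a vertex v in P(A) and distinct vertices x, y in T(A) such that v is adjacent to neither x nor y. -/

import Mathlib

open SimpleGraph

variable {V : Type*}

/-- `a, b, c, d` form an induced path on four vertices (a `P4`) in `G`. -/
def IsP4 (G : SimpleGraph V) (a b c d : V) : Prop :=
  a ≠ b ∧ a ≠ c ∧ a ≠ d ∧ b ≠ c ∧ b ≠ d ∧ c ≠ d ∧
    G.Adj a b ∧ G.Adj b c ∧ G.Adj c d ∧ ¬G.Adj a c ∧ ¬G.Adj a d ∧ ¬G.Adj b d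

/-- A graph is a cograph if it contains no induced `P4`. -/
def IsCograph (G : SimpleGraph V) : Prop :=
  ∀ a b c d : V, ¬IsP4 G a b c d

/-- The vertex set `A` induces a `P4` in `G`. -/
def InducesP4 (G : SimpleGraph V) (A : Set V) : Prop :=
  ∃ a b c d : V, IsP4 G a b c d ∧ A = {a, b, c, d}

/-- `G` is `P4`-sparse: every set of five vertices induces at most one `P4`. -/
def P4Sparse (G : SimpleGraph V) : Prop :=
  ∀ s : Set V, s.ncard = 5 →
    ∀ A B : Set V, A ⊆ s → B ⊆ s → InducesP4 G A → InducesP4 G B → A = B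

/-- `F` is a deletion set of `G`: a set of edges of `G` whose removal yields a cograph. -/
def IsDeletionSet (G : SimpleGraph V) (F : Set (Sym2 V)) : Prop :=
  F ⊆ G.edgeSet ∧ IsCograph (G.deleteEdges F)

/-- The minimum size of a deletion set of `G`. -/
noncomputable def cographAlpha (G : SimpleGraph V) : ℕ :=
  sInf {n | ∃ F : Set (Sym2 V), IsDeletionSet G F ∧ F.ncard = n}

/-- `T(A)`: the vertices outside `A` adjacent to all vertices of `A`. -/
def tSet (G : SimpleGraph V) (A : Set V) : Set V :=
  {v | v ∉ A ∧ ∀ a ∈ A, G.Adj v a}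

/-- `I(A)`: the vertices outside `A` adjacent to no vertex of `A`. -/
def iSet (G : SimpleGraph V) (A : Set V) : Set V :=
  {v | v ∉ A ∧ ∀ a ∈ A, ¬G.Adj v a}

/-- `P(A)`: the vertices `v` outside `A` with `1 ≤ |N(v) ∩ A| ≤ 3`. -/
def pSet (G : SimpleGraph V) (A : Set V) : Set V :=
  {v | v ∉ A ∧ 1 ≤ (G.neighborSet v ∩ A).ncard ∧ (G.neighborSet v ∩ A).ncard ≤ 3}

/-!
In a `P4`-sparse graph a vertex of `P(A)` is adjacent to exactly the two midpoints of the path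
induced by `A`: any other pattern of adjacency creates a second `P4` in the same five vertices.
So if `A` induces the path `a b c d` and `v ∈ P(A)` is adjacent to neither `x` nor `y` in `T(A)`,
then `v b x d` and `v b y d` are two induced `P4`s in the five vertices `v, b, x, y, d`.
-/

section

variable {G : SimpleGraph V} {A B : Set V} {a b c d v : V}

theorem isP4_iff_adj :
    IsP4 G a b c d ↔
      G.Adj a b ∧ G.Adj b c ∧ G.Adj c d ∧ ¬G.Adj a c ∧ ¬G.Adj a d ∧ ¬G.Adj b d := by
  refine ⟨fun ⟨_, _, _, _, _, _, h⟩ => h, fun h => ?_⟩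
  have ⟨hab, hbc, hcd, hac, had, _⟩ := h
  have hac' : a ≠ c := fun e => had (e ▸ hcd)
  have had' : a ≠ d := fun e => hac (e ▸ hcd.symm)
  have hbd' : b ≠ d := fun e => had (e ▸ hab)
  exact ⟨hab.ne, hac', had', hbc.ne, hbd', hcd.ne, h⟩

theorem IsP4.inducesP4 (h : IsP4 G a b c d) : InducesP4 G {a, b, c, d} :=
  ⟨a, b, c, d, h, rfl⟩

theorem IsP4.symm (h : IsP4 G a b c d) : IsP4 G d c b a := by
  obtain ⟨hab, hbc, hcd, hac, had, hbd⟩ := isP4_iff_adj.mp h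
  exact isP4_iff_adj.mpr ⟨hcd.symm, hbc.symm, hab.symm, mt Adj.symm hbd, mt Adj.symm had,
    mt Adj.symm hac⟩

theorem InducesP4.ncard_eq (hA : InducesP4 G A) : A.ncard = 4 := by
  obtain ⟨a, b, c, d, ⟨hab, hac, had, hbc, hbd, hcd, -⟩, rfl⟩ := hA
  rw [Set.ncard_insert_of_notMem (by simp [hab, hac, had]),
    Set.ncard_insert_of_notMem (by simp [hbc, hbd]), Set.ncard_pair hcd]

theorem InducesP4.finite (hA : InducesP4 G A) : A.Finite :=
  Set.finite_of_ncard_pos (by simp [hA.ncard_eq])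

theorem InducesP4.mem_pSet_iff (hA : InducesP4 G A) :
    v ∈ pSet G A ↔ v ∉ A ∧ v ∉ iSet G A ∧ v ∉ tSet G A := by
  refine and_congr_right fun hv => and_congr ?_ ?_
  · have hmeets : v ∉ iSet G A ↔ (G.neighborSet v ∩ A).Nonempty := by
      simp [iSet, hv, Set.Nonempty, and_comm]
    rw [hmeets, Nat.one_le_iff_ne_zero, ← Nat.pos_iff_ne_zero,
      Set.ncard_pos (hA.finite.inter_of_right _)]
  · have hmisses : v ∉ tSet G A ↔ ¬A ⊆ G.neighborSet v := by
      simp [tSet, hv, Set.subset_def]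
    have hle_iff_lt :
        (G.neighborSet v ∩ A).ncard ≤ 3 ↔ (G.neighborSet v ∩ A).ncard < A.ncard := by
      rw [hA.ncard_eq, Nat.lt_succ_iff]
    rw [hmisses, hle_iff_lt, ← Set.inter_eq_right]
    refine ⟨fun h e => h.ne (congrArg Set.ncard e), fun h => ?_⟩
    exact Set.ncard_lt_ncard (Set.inter_subset_right.ssubset_of_ne h) hA.finite

theorem P4Sparse.eq_of_subset_insert (hG : P4Sparse G) (hA : InducesP4 G A) (hB : InducesP4 G B)
    (hBA : B ⊆ insert v A) : B = A := by
  by_cases hv : v ∈ A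
  · rw [Set.insert_eq_of_mem hv] at hBA
    exact Set.eq_of_subset_of_ncard_le hBA (by rw [hA.ncard_eq, hB.ncard_eq]) hA.finite
  · have hcard : (insert v A).ncard = 5 := by
      rw [Set.ncard_insert_of_notMem hv hA.finite, hA.ncard_eq]
    exact hG _ hcard B A hBA (Set.subset_insert v A) hB hA

theorem P4Sparse.not_isP4_of_subset_insert (hG : P4Sparse G) (hA : InducesP4 G A) (hv : v ∉ A)
    (p q r s : V) (hmem : v ∈ ({p, q, r, s} : Set V))
    (hsub : ({p, q, r, s} : Set V) ⊆ insert v A) : ¬IsP4 G p q r s :=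
  fun h => hv (hG.eq_of_subset_insert hA h.inducesP4 hsub ▸ hmem)

theorem P4Sparse.isP4_third_unique (hG : P4Sparse G) {p q r r' s : V} (h : IsP4 G p q r s)
    (h' : IsP4 G p q r' s) : r = r' := by
  by_contra hne
  have hr : r ∉ ({p, q, r', s} : Set V) := by
    obtain ⟨-, hpr, -, hqr, -, hrs, -⟩ := h
    simp [hpr.symm, hqr.symm, hrs, hne]
  exact hG.not_isP4_of_subset_insert h'.inducesP4 hr p q r s (by simp)
    (by simp [Set.insert_subset_iff]) h

theorem P4Sparse.not_adj_left_end (hG : P4Sparse G) (h : IsP4 G a b c d)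
    (hv : v ∉ ({a, b, c, d} : Set V)) (hvT : v ∉ tSet G {a, b, c, d}) : ¬G.Adj v a := by
  intro hva
  have no_P4 := hG.not_isP4_of_subset_insert h.inducesP4 hv
  obtain ⟨hab, hbc, hcd, hac, had, hbd⟩ := isP4_iff_adj.mp h
  by_cases hvc : G.Adj v c
  · by_cases hvd : G.Adj v d
    · have hvb : ¬G.Adj v b := fun hvb => hvT ⟨hv, by simp [hva, hvb, hvc, hvd]⟩
      exact no_P4 b a v d (by simp) (by simp [Set.insert_subset_iff])
        (isP4_iff_adj.mpr ⟨hab.symm, hva.symm, hvd, mt Adj.symm hvb, hbd, had⟩)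
    · exact no_P4 a v c d (by simp) (by simp [Set.insert_subset_iff])
        (isP4_iff_adj.mpr ⟨hva.symm, hvc, hcd, hac, had, hvd⟩)
  · by_cases hvb : G.Adj v b
    · by_cases hvd : G.Adj v d
      · exact no_P4 a v d c (by simp) (by simp [Set.insert_subset_iff])
          (isP4_iff_adj.mpr ⟨hva.symm, hvd, hcd.symm, had, hac, hvc⟩)
      · exact no_P4 v b c d (by simp) (by simp [Set.insert_subset_iff])
          (isP4_iff_adj.mpr ⟨hvb, hbc, hcd, hvc, hvd, hbd⟩)
    · exact no_P4 v a b c (by simp) (by simp [Set.insert_subset_iff])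
        (isP4_iff_adj.mpr ⟨hva, hab, hbc, hvb, hvc, hac⟩)

theorem P4Sparse.not_adj_right_end (hG : P4Sparse G) (h : IsP4 G a b c d)
    (hv : v ∉ ({a, b, c, d} : Set V)) (hvT : v ∉ tSet G {a, b, c, d}) : ¬G.Adj v d := by
  have hrev : ({a, b, c, d} : Set V) = {d, c, b, a} := by grind
  rw [hrev] at hv hvT
  exact hG.not_adj_left_end h.symm hv hvT

theorem P4Sparse.adj_midpoints_of_mem_pSet (hG : P4Sparse G) (h : IsP4 G a b c d)
    (hv : v ∈ pSet G {a, b, c, d}) : G.Adj v b ∧ G.Adj v c := by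
  obtain ⟨hvA, hvI, hvT⟩ := h.inducesP4.mem_pSet_iff.mp hv
  have hva := hG.not_adj_left_end h hvA hvT
  have hvd := hG.not_adj_right_end h hvA hvT
  have no_P4 := hG.not_isP4_of_subset_insert h.inducesP4 hvA
  obtain ⟨hab, hbc, hcd, hac, -, hbd⟩ := isP4_iff_adj.mp h
  have hc_of_hb (hvb : G.Adj v b) : G.Adj v c := by
    by_contra hvc
    exact no_P4 v b c d (by simp) (by simp [Set.insert_subset_iff])
      (isP4_iff_adj.mpr ⟨hvb, hbc, hcd, hvc, hvd, hbd⟩)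
  have hb_of_hc (hvc : G.Adj v c) : G.Adj v b := by
    by_contra hvb
    exact no_P4 v c b a (by simp) (by simp [Set.insert_subset_iff])
      (isP4_iff_adj.mpr ⟨hvc, hbc.symm, hab.symm, hvb, hva, mt Adj.symm hac⟩)
  have hvbc : G.Adj v b ∨ G.Adj v c := by
    by_contra! hnot
    exact hvI ⟨hvA, by simp [hva, hvd, hnot]⟩
  exact hvbc.elim (fun hvb => ⟨hvb, hc_of_hb hvb⟩) (fun hvc => ⟨hb_of_hc hvc, hvc⟩)

end

/-- **Observation 2.6.** If `G` is `P4`-sparse and `A` induces a `P4`, then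
there are no `v ∈ P(A)` and distinct `x, y ∈ T(A)` such that `v` is adjacent to neither `x`
nor `y`. -/
theorem p4Sparse_obs_2_6 (G : SimpleGraph V) (hG : P4Sparse G)
    (a b c d : V) (hP4 : IsP4 G a b c d) (A : Set V) (hA : A = {a, b, c, d}) :
    ¬∃ v x y : V, x ≠ y ∧ v ∈ pSet G A ∧ x ∈ tSet G A ∧ y ∈ tSet G A ∧
      ¬G.Adj v x ∧ ¬G.Adj v y := by
  rintro ⟨v, x, y, hxy, hv, ⟨-, hx⟩, ⟨-, hy⟩, hvx, hvy⟩
  subst hA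
  obtain ⟨hvA, -, hvT⟩ := hP4.inducesP4.mem_pSet_iff.mp hv
  have hvb : G.Adj v b := (hG.adj_midpoints_of_mem_pSet hP4 hv).1
  have hvd : ¬G.Adj v d := hG.not_adj_right_end hP4 hvA hvT
  obtain ⟨-, -, -, -, -, hbd⟩ := isP4_iff_adj.mp hP4
  have hP4z {z : V} (hz : ∀ w ∈ ({a, b, c, d} : Set V), G.Adj z w) (hvz : ¬G.Adj v z) :
      IsP4 G v b z d :=
    isP4_iff_adj.mpr ⟨hvb, (hz b (by simp)).symm, hz d (by simp), hvz, hvd, hbd⟩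
  exact hxy (hG.isP4_third_unique (hP4z hx hvx) (hP4z hy hvy))
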